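/- arXiv:1609.00135 — 2 statements merged into one kernel-verified Lean document; each statement's English description precedes it below -/
import Mathlib

section
/- Let x be a solution of the heavy ball equation with vanishing damping and source term g satisfying ∫₀^∞ (1+t)^{(α+1)/2} ‖g(t)‖ dt < ∞, and suppose Φ is even (Φ(−u) = Φ(u) for all u ∈ H). Then x(t) converges strongly in H (i.e. in norm) as t → +∞ to some x* ∈ argmin Φ. -/
open MeasureTheory Filter Real Set RealInnerProductSpace

/-!
Write the damping as `γ = 1 / ρ` and let `P` be a primitive of `ρ`. For a vector `z` and a constant
`κ` the function
`ρ ⟪x', x + z⟫ + (1 - ρ') ‖x + z‖ ^ 2 / 2 + (P - κ) (‖x'‖ ^ 2 / 2 + Φ x - Φ z)`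
is almost decreasing while `P ≥ κ`: its anchor is `-z`, where `Φ` takes the value `Φ z` because it
is even, so the gradient inequality absorbs the force. For `z = 0` and `κ = 0` it is coercive, and
Grönwall's lemma bounds `x`, `√P ‖x'‖` and `P (Φ x - Φ 0)` and makes `ρ ‖x'‖ ^ 2` integrable. For
`z = x T` and `κ = P s` on `[s, T]` it then yields `‖x T + x T‖ ^ 2 ≤ ‖x s + x T‖ ^ 2 + o(1)`,
which by the parallelogram law makes `x` Cauchy. Since `P → ∞`, the limit minimizes `Φ`.
-/

open scoped Topology

section RealAnalysis

theorem sub_le_integral_of_hasDerivAt_le {f f' k : ℝ → ℝ} {s t : ℝ} (hst : s ≤ t)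
    (hf : ∀ v ∈ Icc s t, HasDerivAt f (f' v) v) (hk : IntegrableOn k (Icc s t))
    (hle : ∀ v ∈ Ioo s t, f' v ≤ k v) : f t - f s ≤ ∫ v in s..t, k v :=
  intervalIntegral.sub_le_integral_of_hasDeriv_right_of_le hst
    (fun v hv => (hf v hv).continuousAt.continuousWithinAt)
    (fun v hv => (hf v (Ioo_subset_Icc_self hv)).hasDerivWithinAt) hk hle

theorem intervalIntegral_le_integral_Ioi {k : ℝ → ℝ} {a t : ℝ} (hat : a ≤ t)
    (hk : IntegrableOn k (Ioi a)) (hk0 : ∀ v ∈ Ioi a, 0 ≤ k v) :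
    ∫ v in a..t, k v ≤ ∫ v in Ioi a, k v := by
  rw [intervalIntegral.integral_of_le hat]
  exact setIntegral_mono_set hk (ae_restrict_of_forall_mem measurableSet_Ioi hk0)
    Ioc_subset_Ioi_self.eventuallyLE

theorem sub_le_integral_Ioi_of_hasDerivAt_le {f f' k : ℝ → ℝ} {s t : ℝ} (hst : s ≤ t)
    (hf : ∀ v ∈ Icc s t, HasDerivAt f (f' v) v) (hk : IntegrableOn k (Ici s))
    (hk0 : ∀ v ∈ Ici s, 0 ≤ k v) (hle : ∀ v ∈ Ioo s t, f' v ≤ k v) :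
    f t - f s ≤ ∫ v in Ioi s, k v :=
  (sub_le_integral_of_hasDerivAt_le hst hf (hk.mono_set Icc_subset_Ici_self) hle).trans
    (intervalIntegral_le_integral_Ioi hst (hk.mono_set Ioi_subset_Ici_self)
      fun v hv => hk0 v (Ioi_subset_Ici_self hv))

theorem one_add_le_mul_exp_integral_of_hasDerivAt_le {F F' k : ℝ → ℝ} {a t : ℝ} (hat : a ≤ t)
    (hF : ∀ v ∈ Ici a, HasDerivAt F (F' v) v) (hF0 : ∀ v ∈ Ici a, 0 ≤ F v)
    (hk : IntegrableOn k (Ici a)) (hk0 : ∀ v ∈ Ici a, 0 ≤ k v)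
    (hle : ∀ v ∈ Ici a, F' v ≤ k v * (1 + F v)) :
    1 + F t ≤ (1 + F a) * exp (∫ v in Ioi a, k v) := by
  have hpos : ∀ v ∈ Ici a, 0 < 1 + F v := fun v hv => by linarith [hF0 v hv]
  have hlog : log (1 + F t) - log (1 + F a) ≤ ∫ v in Ioi a, k v :=
    sub_le_integral_Ioi_of_hasDerivAt_le hat
      (fun v hv => ((hF v hv.1).const_add 1).log (hpos v hv.1).ne') hk hk0
      fun v hv => (div_le_iff₀ (hpos v hv.1.le)).2 (hle v hv.1.le)
  have hexp := (log_le_iff_le_exp (hpos t hat)).1 (sub_le_iff_le_add'.1 hlog)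
  rwa [exp_add, exp_log (hpos a self_mem_Ici)] at hexp

theorem integrableOn_Ici_of_hasDerivAt_le_sub {F F' k u : ℝ → ℝ} {a m : ℝ}
    (hF : ∀ v ∈ Ici a, HasDerivAt F (F' v) v) (hFm : ∀ v ∈ Ici a, m ≤ F v)
    (hk : IntegrableOn k (Ici a)) (hk0 : ∀ v ∈ Ici a, 0 ≤ k v)
    (hu : LocallyIntegrableOn u (Ici a)) (hu0 : ∀ v ∈ Ici a, 0 ≤ u v)
    (hle : ∀ v ∈ Ici a, F' v ≤ k v - u v) : IntegrableOn u (Ici a) := by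
  have huIcc : ∀ t, IntegrableOn u (Icc a t) := fun t =>
    hu.integrableOn_compact_subset Icc_subset_Ici_self isCompact_Icc
  rw [integrableOn_Ici_iff_integrableOn_Ioi]
  refine integrableOn_Ioi_of_intervalIntegral_norm_bounded (F a - m + ∫ v in Ioi a, k v) a
    (fun t => (huIcc t).mono_set Ioc_subset_Icc_self) tendsto_id ?_
  filter_upwards [eventually_ge_atTop a] with t hat
  have hkIcc : IntegrableOn k (Icc a t) := hk.mono_set Icc_subset_Ici_self
  have hnorm : ∫ v in a..t, ‖u v‖ = ∫ v in a..t, u v :=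
    intervalIntegral.integral_congr fun v hv =>
      norm_of_nonneg (hu0 v (uIcc_of_le hat ▸ hv).1)
  have hdecay : F t - F a ≤ (∫ v in a..t, k v) - ∫ v in a..t, u v := by
    rw [← intervalIntegral.integral_sub
      ((intervalIntegrable_iff_integrableOn_Icc_of_le hat).2 hkIcc)
      ((intervalIntegrable_iff_integrableOn_Icc_of_le hat).2 (huIcc t))]
    exact sub_le_integral_of_hasDerivAt_le hat (fun v hv => hF v hv.1) (hkIcc.sub (huIcc t))
      fun v hv => hle v hv.1.le
  have hkIoi := intervalIntegral_le_integral_Ioi hat (hk.mono_set Ioi_subset_Ici_self)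
    fun v hv => hk0 v (Ioi_subset_Ici_self hv)
  exact hnorm.trans_le (by linarith [hFm t hat])

theorem tendsto_sq_div_of_tendsto_deriv_zero {f f' F : ℝ → ℝ} {t₀ : ℝ}
    (hf0 : ∀ t ∈ Ici t₀, 0 ≤ f t) (hf : ∀ t ∈ Ici t₀, HasDerivAt f (f' t) t)
    (hF : ∀ t ∈ Ici t₀, HasDerivAt F (f t) t) (hf' : Tendsto f' atTop (𝓝 0))
    (hFtop : Tendsto F atTop atTop) : Tendsto (fun t => f t ^ 2 / F t) atTop (𝓝 0) := by
  refine tendsto_order.2 ⟨fun b hb => ?_, fun ε hε => ?_⟩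
  · filter_upwards [hFtop.eventually_ge_atTop 0] with t hFt
    exact hb.trans_le (by positivity)
  obtain ⟨b, hb⟩ := eventually_atTop.1
    ((hf'.eventually_le_const (show 0 < ε / 4 by positivity)).and (eventually_ge_atTop t₀))
  have hanti : AntitoneOn (fun t => f t ^ 2 - ε / 2 * F t) (Ici b) := by
    have hderiv : ∀ t ∈ Ici b, HasDerivAt (fun t => f t ^ 2 - ε / 2 * F t)
        (2 * f t * (f' t - ε / 4)) t := fun t ht =>
      (((hf t (hb t ht).2).pow 2).sub ((hF t (hb t ht).2).const_mul (ε / 2))).congr_deriv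
        (by push_cast; ring)
    refine antitoneOn_of_hasDerivWithinAt_nonpos (convex_Ici b)
      (fun t ht => (hderiv t ht).continuousAt.continuousWithinAt)
      (fun t ht => (hderiv t (interior_subset ht)).hasDerivWithinAt) fun t ht => ?_
    obtain ⟨hft', ht₀⟩ := hb t (interior_subset ht)
    exact mul_nonpos_of_nonneg_of_nonpos (mul_nonneg zero_le_two (hf0 t ht₀)) (by linarith)
  filter_upwards [eventually_ge_atTop b, hFtop.eventually_gt_atTop 0,
    (hFtop.const_mul_atTop (half_pos hε)).eventually_gt_atTop (f b ^ 2 - ε / 2 * F b)]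
    with t hbt hFt hlarge
  have hle : f t ^ 2 - ε / 2 * F t ≤ f b ^ 2 - ε / 2 * F b := hanti self_mem_Ici hbt hbt
  rw [div_lt_iff₀ hFt]
  linarith

end RealAnalysis

section Convergence

variable {ι : Type*} [SemilatticeSup ι] [Nonempty ι]

theorem exists_tendsto_of_forall_eventually_le_add {f : ι → ℝ} {m : ℝ} (hm : ∀ t, m ≤ f t)
    (h : ∀ ε > 0, ∀ᶠ s in atTop, ∀ t ≥ s, f t ≤ f s + ε) : ∃ l, Tendsto f atTop (𝓝 l) := by
  refine tendsto_of_no_upcrossings dense_univ ?_ ?_ (isBoundedUnder_of ⟨m, hm⟩)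
  · rintro a - b - hab ⟨hlt, hgt⟩
    obtain ⟨s, hsa, hs⟩ := (hlt.and_eventually (h (b - a) (sub_pos.2 hab))).exists
    obtain ⟨t, hbt, hst⟩ := (hgt.and_eventually (eventually_ge_atTop s)).exists
    linarith [hs t hst]
  · obtain ⟨s, hs⟩ := (h 1 one_pos).exists
    exact isBoundedUnder_of_eventually_le ((eventually_ge_atTop s).mono hs)

/- Since `‖2 x t‖ ≤ ‖x s + x t‖ + o(1)` forces `‖x‖` to be almost decreasing, it converges, and
the parallelogram law turns this into the Cauchy property. -/
theorem exists_tendsto_of_forall_eventually_norm_add_self_sq_le {H : Type*}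
    [NormedAddCommGroup H] [InnerProductSpace ℝ H] [CompleteSpace H] {x : ι → H}
    (h : ∀ ε > 0, ∀ᶠ s in atTop, ∀ t ≥ s, ‖x t + x t‖ ^ 2 ≤ ‖x s + x t‖ ^ 2 + ε) :
    ∃ y, Tendsto x atTop (𝓝 y) := by
  have hself : ∀ t, ‖x t + x t‖ ^ 2 = 4 * ‖x t‖ ^ 2 := fun t => by
    rw [← two_smul ℝ, norm_smul, mul_pow]
    norm_num
  have hcauchy : ∀ ε > 0, ∀ᶠ s in atTop, ∀ t ≥ s,
      ‖x t - x s‖ ^ 2 ≤ 2 * ‖x s‖ ^ 2 - 2 * ‖x t‖ ^ 2 + ε := fun ε hε =>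
    (h ε hε).mono fun s hs t hst => by
      have hpar := parallelogram_law_with_norm ℝ (x s) (x t)
      rw [norm_sub_rev]
      linarith [hs t hst, hself t]
  obtain ⟨l, hl⟩ : ∃ l, Tendsto (fun t => ‖x t‖ ^ 2) atTop (𝓝 l) :=
    exists_tendsto_of_forall_eventually_le_add (fun t => sq_nonneg ‖x t‖) fun ε hε =>
      (hcauchy (2 * ε) (by positivity)).mono fun s hs t hst => by
        linarith [hs t hst, sq_nonneg ‖x t - x s‖]
  refine cauchySeq_tendsto_of_complete (Metric.cauchySeq_iff'.2 fun ε hε => ?_)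
  have hε2 : 0 < ε ^ 2 / 8 := by positivity
  obtain ⟨N, hN⟩ := eventually_atTop.1 ((hcauchy (ε ^ 2 / 8) hε2).and
    ((hl.eventually_lt_const (lt_add_of_pos_right l hε2)).and
      (hl.eventually_const_lt (sub_lt_self l hε2))))
  refine ⟨N, fun t ht => ?_⟩
  rw [dist_eq_norm]
  refine lt_of_pow_lt_pow_left₀ 2 hε.le ?_
  linarith [(hN N le_rfl).1 t ht, (hN N le_rfl).2.1, (hN t ht).2.2]

end Convergence

section Convex

theorem inner_gradient_le_sub {H : Type*} [NormedAddCommGroup H] [InnerProductSpace ℝ H]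
    [CompleteSpace H] {Φ : H → ℝ} {s : Set H} {u w ξ : H} (hΦ : ConvexOn ℝ s Φ)
    (hu : u ∈ s) (hw : w ∈ s) (hξ : HasGradientAt Φ ξ u) : ⟪ξ, w - u⟫ ≤ Φ w - Φ u := by
  have hline : HasDerivAt (Φ ∘ AffineMap.lineMap (k := ℝ) u w) ⟪ξ, w - u⟫ 0 := by
    have hΦu : HasFDerivAt Φ (InnerProductSpace.toDual ℝ H ξ) (AffineMap.lineMap u w (0 : ℝ)) := by
      simpa only [AffineMap.lineMap_apply_zero] using hξ.hasFDerivAt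
    simpa using hΦu.comp_hasDerivAt (0 : ℝ) AffineMap.hasDerivAt_lineMap
  simpa [slope] using (hΦ.comp_affineMap (AffineMap.lineMap u w)).le_slope_of_hasDerivAt
    (by simpa using hu) (by simpa using hw) one_pos hline

theorem apply_zero_le_of_convexOn_of_even {E : Type*} [AddCommGroup E] [Module ℝ E]
    {Φ : E → ℝ} (hΦ : ConvexOn ℝ univ Φ) (heven : ∀ u, Φ (-u) = Φ u) (u : E) : Φ 0 ≤ Φ u := by
  have hmid := hΦ.2 (mem_univ u) (mem_univ (-u)) one_half_pos.le one_half_pos.le (add_halves 1)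
  rw [smul_neg, add_neg_cancel, heven, ← add_smul, add_halves, one_smul] at hmid
  exact hmid

end Convex

/-- A damping coefficient `γ = 1 / ρ` on `[t₀, ∞)` under which inertia is asymptotically negligible.
It is encoded by its reciprocal `ρ`, with `ρ'` and `ρ''` the first two derivatives of `ρ` and `P` a
primitive of `ρ`; any choice of the constant of integration is allowed. -/
structure IsSlowDamping (ρ ρ' ρ'' P : ℝ → ℝ) (t₀ : ℝ) : Prop where
  pos : ∀ t ∈ Ici t₀, 0 < ρ t
  hasDerivAt : ∀ t ∈ Ici t₀, HasDerivAt ρ (ρ' t) t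
  hasDerivAt_deriv : ∀ t ∈ Ici t₀, HasDerivAt ρ' (ρ'' t) t
  hasDerivAt_primitive : ∀ t ∈ Ici t₀, HasDerivAt P (ρ t) t
  tendsto_deriv : Tendsto ρ' atTop (𝓝 0)
  integrableOn_deriv_deriv : IntegrableOn ρ'' (Ici t₀)
  tendsto_primitive : Tendsto P atTop atTop

/-- Times from which the damping has entered its asymptotic regime: there the Lyapunov function
anchored at `0` is coercive. The thresholds are not optimized. -/
structure IsLateTime (ρ ρ' P : ℝ → ℝ) (t₀ t : ℝ) : Prop where
  ge : t₀ ≤ t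
  primitive_pos : 0 < P t
  sq_le : 8 * ρ t ^ 2 ≤ P t
  deriv_le : ρ' t ≤ 1 / 2

namespace IsSlowDamping

variable {ρ ρ' ρ'' P : ℝ → ℝ} {t₀ : ℝ}

theorem tendsto_sq_div_primitive (hρ : IsSlowDamping ρ ρ' ρ'' P t₀) :
    Tendsto (fun t => ρ t ^ 2 / P t) atTop (𝓝 0) :=
  tendsto_sq_div_of_tendsto_deriv_zero (fun t ht => (hρ.pos t ht).le) hρ.hasDerivAt
    hρ.hasDerivAt_primitive hρ.tendsto_deriv hρ.tendsto_primitive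

theorem monotoneOn_primitive (hρ : IsSlowDamping ρ ρ' ρ'' P t₀) : MonotoneOn P (Ici t₀) :=
  monotoneOn_of_hasDerivWithinAt_nonneg (convex_Ici t₀)
    (fun t ht => (hρ.hasDerivAt_primitive t ht).continuousAt.continuousWithinAt)
    (fun t ht => (hρ.hasDerivAt_primitive t (interior_subset ht)).hasDerivWithinAt)
    fun t ht => (hρ.pos t (interior_subset ht)).le

theorem eventually_isLateTime (hρ : IsSlowDamping ρ ρ' ρ'' P t₀) :
    ∀ᶠ t in atTop, IsLateTime ρ ρ' P t₀ t := by
  filter_upwards [eventually_ge_atTop t₀, hρ.tendsto_primitive.eventually_gt_atTop 0,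
    hρ.tendsto_sq_div_primitive.eventually_le_const (show (0 : ℝ) < 1 / 8 by norm_num),
    hρ.tendsto_deriv.eventually_le_const one_half_pos] with t ht hP hsq hderiv
  refine ⟨ht, hP, ?_, hderiv⟩
  rw [div_le_iff₀ hP] at hsq
  linarith

theorem tendsto_mul_norm_zero {E : Type*} [NormedAddCommGroup E] {v : ℝ → E} {a R : ℝ}
    (hρ : IsSlowDamping ρ ρ' ρ'' P t₀) (hv : ∀ t ∈ Ici a, √(P t) * ‖v t‖ ≤ R) :
    Tendsto (fun t => ρ t * ‖v t‖) atTop (𝓝 0) := by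
  have hratio : Tendsto (fun t => √(ρ t ^ 2 / P t) * R) atTop (𝓝 0) := by
    simpa using hρ.tendsto_sq_div_primitive.sqrt.mul_const R
  refine squeeze_zero' ?_ ?_ hratio
  · filter_upwards [eventually_ge_atTop t₀] with t ht
    exact mul_nonneg (hρ.pos t ht).le (norm_nonneg _)
  · filter_upwards [hρ.eventually_isLateTime, eventually_ge_atTop a] with t hlate hat
    have hpos := hρ.pos t hlate.ge
    have hsqrt : 0 < √(P t) := sqrt_pos.2 hlate.primitive_pos
    calc ρ t * ‖v t‖ = √(ρ t ^ 2 / P t) * (√(P t) * ‖v t‖) := by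
          rw [sqrt_div (sq_nonneg _), sqrt_sq hpos.le]
          field_simp
      _ ≤ √(ρ t ^ 2 / P t) * R := mul_le_mul_of_nonneg_left (hv t hat) (sqrt_nonneg _)

end IsSlowDamping

theorem IsLateTime.le_sqrt_primitive {ρ ρ' P : ℝ → ℝ} {t₀ t : ℝ}
    (ht : IsLateTime ρ ρ' P t₀ t) : ρ t ≤ √(P t) :=
  le_sqrt_of_sq_le (by linarith [ht.sq_le, sq_nonneg (ρ t)])

section HeavyBall

variable {H : Type*} [NormedAddCommGroup H] [InnerProductSpace ℝ H]
  {Φ : H → ℝ} {Φ' : H → H} {g x x' x'' : ℝ → H} {ρ ρ' ρ'' P : ℝ → ℝ} {t₀ a t : ℝ}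

/-- `x` is a classical solution of the heavy ball equation with damping `1 / ρ`, force field `-Φ'`
and source `g` on `[t₀, ∞)`; `x'` and `x''` stand for its velocity and acceleration. -/
structure IsHeavyBallSolution (ρ : ℝ → ℝ) (Φ' : H → H) (g x x' x'' : ℝ → H) (t₀ : ℝ) :
    Prop where
  hasDerivAt : ∀ t ∈ Ici t₀, HasDerivAt x (x' t) t
  hasDerivAt_velocity : ∀ t ∈ Ici t₀, HasDerivAt x' (x'' t) t
  eq_source : ∀ t ∈ Ici t₀, x'' t + (ρ t)⁻¹ • x' t + Φ' (x t) = g t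

/-- The Lyapunov function of the heavy ball equation anchored at `-z`. The quadratic part has
derivative `ρ (‖x'‖ ^ 2 + ⟪x'' + x' / ρ, x + z⟫)` up to a term in `ρ''`, and the shift `κ` of the
energy weight `P` lets the energy part vanish at a prescribed time. -/
noncomputable def lyapunov (ρ ρ' P : ℝ → ℝ) (Φ : H → ℝ) (x x' : ℝ → H) (z : H) (κ t : ℝ) : ℝ :=
  ρ t * ⟪x' t, x t + z⟫ + (1 - ρ' t) * (‖x t + z‖ ^ 2 / 2)
    + (P t - κ) * (‖x' t‖ ^ 2 / 2 + Φ (x t) - Φ z)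

/-- Bound for the rate at which `lyapunov` can grow along a solution when `‖x‖`, `√P ‖x'‖` and the
norm of the anchor are at most `R`. -/
noncomputable def driftBound (R : ℝ) (ρ ρ'' P : ℝ → ℝ) (g x' : ℝ → H) (t : ℝ) : ℝ :=
  3 / 2 * (ρ t * ‖x' t‖ ^ 2) + 3 * R * (√(P t) * ‖g t‖) + 2 * R ^ 2 * |ρ'' t|

/-- Bound for the distance between `lyapunov` and `‖x + z‖ ^ 2 / 2` at a time where its energy part
vanishes, when `‖x‖` and `‖z‖` are at most `R`. -/
noncomputable def boundaryError (R : ℝ) (ρ ρ' : ℝ → ℝ) (x' : ℝ → H) (t : ℝ) : ℝ :=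
  2 * R * (ρ t * ‖x' t‖) + 2 * R ^ 2 * |ρ' t|

theorem abs_lyapunov_primitive_sub_le {R : ℝ} {z : H} (hρ : 0 ≤ ρ t) (hx : ‖x t‖ ≤ R)
    (hz : ‖z‖ ≤ R) :
    |lyapunov ρ ρ' P Φ x x' z (P t) t - ‖x t + z‖ ^ 2 / 2| ≤ boundaryError R ρ ρ' x' t := by
  have hxz : ‖x t + z‖ ≤ 2 * R := (norm_add_le _ _).trans (by linarith)
  calc |lyapunov ρ ρ' P Φ x x' z (P t) t - ‖x t + z‖ ^ 2 / 2|
      = |ρ t * ⟪x' t, x t + z⟫ - ρ' t * (‖x t + z‖ ^ 2 / 2)| := by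
        rw [lyapunov]
        ring_nf
    _ ≤ |ρ t * ⟪x' t, x t + z⟫| + |ρ' t * (‖x t + z‖ ^ 2 / 2)| := abs_sub _ _
    _ ≤ ρ t * (‖x' t‖ * ‖x t + z‖) + |ρ' t| * (‖x t + z‖ ^ 2 / 2) := by
        rw [abs_mul, abs_mul, abs_of_nonneg hρ, abs_of_nonneg (a := _ / _) (by positivity)]
        gcongr
        exact abs_real_inner_le_norm _ _
    _ ≤ ρ t * (‖x' t‖ * (2 * R)) + |ρ' t| * ((2 * R) ^ 2 / 2) := by gcongr
    _ = boundaryError R ρ ρ' x' t := by rw [boundaryError]; ring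

theorem le_lyapunov_zero (ht : IsLateTime ρ ρ' P t₀ t) (hρ : 0 ≤ ρ t) :
    ‖x t‖ ^ 2 / 8 + P t * ‖x' t‖ ^ 2 / 4 + P t * (Φ (x t) - Φ 0)
      ≤ lyapunov ρ ρ' P Φ x x' 0 0 t := by
  have hinner : -(ρ t * (‖x' t‖ * ‖x t‖)) ≤ ρ t * ⟪x' t, x t⟫ := by
    rw [← mul_neg]
    exact mul_le_mul_of_nonneg_left (neg_le_of_abs_le (abs_real_inner_le_norm _ _)) hρ
  have hyoung : ρ t * (‖x' t‖ * ‖x t‖) ≤ P t * ‖x' t‖ ^ 2 / 4 + ‖x t‖ ^ 2 / 8 := by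
    linarith [sq_nonneg (ρ t * ‖x' t‖ - ‖x t‖ / 4),
      mul_le_mul_of_nonneg_right ht.sq_le (sq_nonneg ‖x' t‖)]
  have hquad : ρ' t * ‖x t‖ ^ 2 ≤ 1 / 2 * ‖x t‖ ^ 2 :=
    mul_le_mul_of_nonneg_right ht.deriv_le (sq_nonneg _)
  rw [lyapunov, add_zero, sub_zero]
  linarith

theorem bounds_of_lyapunov_zero_le {B : ℝ} (ht : IsLateTime ρ ρ' P t₀ t) (hρ : 0 ≤ ρ t)
    (hmin : ∀ u, Φ 0 ≤ Φ u) (hB : lyapunov ρ ρ' P Φ x x' 0 0 t ≤ B) :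
    ‖x t‖ ^ 2 ≤ 8 * B ∧ (√(P t) * ‖x' t‖) ^ 2 ≤ 8 * B ∧ P t * (Φ (x t) - Φ 0) ≤ B := by
  have hlow := (le_lyapunov_zero ht hρ).trans hB
  have hpot : 0 ≤ P t * (Φ (x t) - Φ 0) :=
    mul_nonneg ht.primitive_pos.le (sub_nonneg.2 (hmin _))
  have hkin : 0 ≤ P t * ‖x' t‖ ^ 2 := mul_nonneg ht.primitive_pos.le (sq_nonneg _)
  have hpos := sq_nonneg ‖x t‖
  rw [mul_pow, sq_sqrt ht.primitive_pos.le]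
  exact ⟨by linarith, by linarith, by linarith⟩

variable [CompleteSpace H]

theorem hasDerivAt_lyapunov (hρ : IsSlowDamping ρ ρ' ρ'' P t₀)
    (hsol : IsHeavyBallSolution ρ Φ' g x x' x'' t₀) (hΦ : ∀ u, HasGradientAt Φ (Φ' u) u)
    (ht : t ∈ Ici t₀) (z : H) (κ : ℝ) :
    HasDerivAt (lyapunov ρ ρ' P Φ x x' z κ)
      (3 / 2 * (ρ t * ‖x' t‖ ^ 2) - (P t - κ) / ρ t * ‖x' t‖ ^ 2
        + ρ t * (⟪g t, x t + z⟫ + (Φ (x t) - Φ z - ⟪Φ' (x t), x t + z⟫))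
        + (P t - κ) * ⟪g t, x' t⟫ - ρ'' t * (‖x t + z‖ ^ 2 / 2)) t := by
  have hxz : HasDerivAt (fun t => x t + z) (x' t) t := (hsol.hasDerivAt t ht).add_const z
  have hmomentum := (hρ.hasDerivAt t ht).mul ((hsol.hasDerivAt_velocity t ht).inner ℝ hxz)
  have hquad := ((hρ.hasDerivAt_deriv t ht).const_sub 1).mul (hxz.norm_sq.div_const 2)
  have henergy := ((hρ.hasDerivAt_primitive t ht).sub_const κ).mul
    ((((hsol.hasDerivAt_velocity t ht).norm_sq.div_const 2).add
      ((hΦ (x t)).hasFDerivAt.comp_hasDerivAt t (hsol.hasDerivAt t ht))).sub_const (Φ z))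
  refine ((hmomentum.add hquad).add henergy).congr_deriv ?_
  have hacc : x'' t = g t - (ρ t)⁻¹ • x' t - Φ' (x t) := by
    rw [← hsol.eq_source t ht]
    abel
  have hpos := hρ.pos t ht
  simp only [hacc, inner_sub_left, inner_sub_right, inner_smul_left, inner_smul_right,
    real_inner_self_eq_norm_sq, InnerProductSpace.toDual_apply_apply, RCLike.conj_to_real,
    real_inner_comm (x' t), Pi.add_apply, Function.comp_apply]
  field_simp
  ring

/- Evenness enters here: `Φ z = Φ (-z)`, and the gradient inequality at `-z` controls
`⟪Φ' (x t), x t + z⟫`. -/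
theorem deriv_lyapunov_le (hρ : IsSlowDamping ρ ρ' ρ'' P t₀)
    (hsol : IsHeavyBallSolution ρ Φ' g x x' x'' t₀) (hconv : ConvexOn ℝ univ Φ)
    (hΦ : ∀ u, HasGradientAt Φ (Φ' u) u) (heven : ∀ u, Φ (-u) = Φ u)
    (ht : t ∈ Ici t₀) (z : H) {κ : ℝ} (hκ : κ ≤ P t) :
    deriv (lyapunov ρ ρ' P Φ x x' z κ) t
      ≤ 3 / 2 * (ρ t * ‖x' t‖ ^ 2) - (P t - κ) / ρ t * ‖x' t‖ ^ 2
        + (ρ t * ‖x t + z‖ + (P t - κ) * ‖x' t‖) * ‖g t‖ + |ρ'' t| * (‖x t + z‖ ^ 2 / 2) := by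
  have hgrad : Φ (x t) - Φ z - ⟪Φ' (x t), x t + z⟫ ≤ 0 := by
    have h := inner_gradient_le_sub hconv (mem_univ (x t)) (mem_univ (-z)) (hΦ (x t))
    rw [heven, ← neg_add', inner_neg_right, add_comm z] at h
    linarith
  have hforce : ρ t * (⟪g t, x t + z⟫ + (Φ (x t) - Φ z - ⟪Φ' (x t), x t + z⟫))
      ≤ ρ t * (‖g t‖ * ‖x t + z‖) :=
    mul_le_mul_of_nonneg_left (by linarith [real_inner_le_norm (g t) (x t + z)])
      (hρ.pos t ht).le
  have hpower : (P t - κ) * ⟪g t, x' t⟫ ≤ (P t - κ) * (‖g t‖ * ‖x' t‖) :=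
    mul_le_mul_of_nonneg_left (real_inner_le_norm _ _) (sub_nonneg.2 hκ)
  have hcurv : -ρ'' t * (‖x t + z‖ ^ 2 / 2) ≤ |ρ'' t| * (‖x t + z‖ ^ 2 / 2) :=
    mul_le_mul_of_nonneg_right (neg_le_abs _) (by positivity)
  rw [(hasDerivAt_lyapunov hρ hsol hΦ ht z κ).deriv]
  linarith

theorem deriv_lyapunov_zero_le (hρ : IsSlowDamping ρ ρ' ρ'' P t₀)
    (hsol : IsHeavyBallSolution ρ Φ' g x x' x'' t₀) (hconv : ConvexOn ℝ univ Φ)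
    (hΦ : ∀ u, HasGradientAt Φ (Φ' u) u) (heven : ∀ u, Φ (-u) = Φ u)
    (ht : IsLateTime ρ ρ' P t₀ t) :
    deriv (lyapunov ρ ρ' P Φ x x' 0 0) t
      ≤ (8 * (√(P t) * ‖g t‖) + 4 * |ρ'' t|) * (1 + lyapunov ρ ρ' P Φ x x' 0 0 t)
        - ρ t * ‖x' t‖ ^ 2 := by
  have hpos := hρ.pos t ht.ge
  have hmin := apply_zero_le_of_convexOn_of_even hconv heven
  have hderiv := deriv_lyapunov_le hρ hsol hconv hΦ heven ht.ge 0 ht.primitive_pos.le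
  obtain ⟨hxsq, hx'sq, -⟩ :=
    bounds_of_lyapunov_zero_le (x := x) (x' := x') ht hpos.le hmin le_rfl
  rw [add_zero, sub_zero] at hderiv
  set L := lyapunov ρ ρ' P Φ x x' 0 0 t
  have hx : ‖x t‖ ≤ 4 * (1 + L) := by linarith [sq_nonneg (‖x t‖ - 1)]
  have hx' : √(P t) * ‖x' t‖ ≤ 4 * (1 + L) := by linarith [sq_nonneg (√(P t) * ‖x' t‖ - 1)]
  have hdamp : 8 * (ρ t * ‖x' t‖ ^ 2) ≤ P t / ρ t * ‖x' t‖ ^ 2 := by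
    rw [← mul_assoc]
    refine mul_le_mul_of_nonneg_right ((le_div_iff₀ hpos).2 ?_) (sq_nonneg _)
    linarith [ht.sq_le]
  have hsource : (ρ t * ‖x t‖ + P t * ‖x' t‖) * ‖g t‖ ≤ 8 * (√(P t) * ‖g t‖) * (1 + L) :=
    calc (ρ t * ‖x t‖ + P t * ‖x' t‖) * ‖g t‖
        ≤ (√(P t) * ‖x t‖ + P t * ‖x' t‖) * ‖g t‖ := by gcongr; exact ht.le_sqrt_primitive
      _ = √(P t) * ‖g t‖ * (‖x t‖ + √(P t) * ‖x' t‖) := by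
        linear_combination -‖x' t‖ * ‖g t‖ * sq_sqrt ht.primitive_pos.le
      _ ≤ √(P t) * ‖g t‖ * (4 * (1 + L) + 4 * (1 + L)) := by gcongr
      _ = 8 * (√(P t) * ‖g t‖) * (1 + L) := by ring
  have hcurv : |ρ'' t| * (‖x t‖ ^ 2 / 2) ≤ |ρ'' t| * (4 * (1 + L)) :=
    mul_le_mul_of_nonneg_left (by linarith) (abs_nonneg _)
  have hdiss : 0 ≤ ρ t * ‖x' t‖ ^ 2 := by positivity
  linarith

theorem exists_lyapunov_zero_le_and_integrableOn (hρ : IsSlowDamping ρ ρ' ρ'' P t₀)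
    (hsol : IsHeavyBallSolution ρ Φ' g x x' x'' t₀) (hconv : ConvexOn ℝ univ Φ)
    (hΦ : ∀ u, HasGradientAt Φ (Φ' u) u) (heven : ∀ u, Φ (-u) = Φ u)
    (hg : IntegrableOn (fun t => √(P t) * ‖g t‖) (Ici t₀))
    (ha : ∀ t ∈ Ici a, IsLateTime ρ ρ' P t₀ t) :
    (∃ B, ∀ t ∈ Ici a, lyapunov ρ ρ' P Φ x x' 0 0 t ≤ B) ∧
      IntegrableOn (fun t => ρ t * ‖x' t‖ ^ 2) (Ici a) := by
  set L := lyapunov ρ ρ' P Φ x x' 0 0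
  set k : ℝ → ℝ := fun t => 8 * (√(P t) * ‖g t‖) + 4 * |ρ'' t|
  have hpos : ∀ t ∈ Ici a, 0 < ρ t := fun t ht => hρ.pos t (ha t ht).ge
  have hL : ∀ t ∈ Ici a, HasDerivAt L (deriv L t) t := fun t ht =>
    (hasDerivAt_lyapunov hρ hsol hΦ (ha t ht).ge 0 0).differentiableAt.hasDerivAt
  have hL0 : ∀ t ∈ Ici a, 0 ≤ L t := fun t ht => by
    have hP := (ha t ht).primitive_pos
    have hpot := sub_nonneg.2 (apply_zero_le_of_convexOn_of_even hconv heven (x t))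
    exact le_trans (by positivity) (le_lyapunov_zero (ha t ht) (hpos t ht).le)
  have hL' : ∀ t ∈ Ici a, deriv L t ≤ k t * (1 + L t) - ρ t * ‖x' t‖ ^ 2 := fun t ht =>
    deriv_lyapunov_zero_le hρ hsol hconv hΦ heven (ha t ht)
  have hdiss : ∀ t ∈ Ici a, 0 ≤ ρ t * ‖x' t‖ ^ 2 := fun t ht =>
    mul_nonneg (hpos t ht).le (sq_nonneg _)
  have hk0 : ∀ t ∈ Ici a, 0 ≤ k t := fun t _ => by positivity
  have hk : IntegrableOn k (Ici a) :=
    IntegrableOn.mono_set ((hg.const_mul 8).add (hρ.integrableOn_deriv_deriv.abs.const_mul 4))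
      (Ici_subset_Ici.2 (ha a self_mem_Ici).ge)
  set B := (1 + L a) * exp (∫ v in Ioi a, k v)
  have hB : ∀ t ∈ Ici a, 1 + L t ≤ B := fun t ht =>
    one_add_le_mul_exp_integral_of_hasDerivAt_le ht hL hL0 hk hk0
      fun v hv => (hL' v hv).trans (sub_le_self _ (hdiss v hv))
  have hcont : ContinuousOn (fun t => ρ t * ‖x' t‖ ^ 2) (Ici a) := fun t ht =>
    ((hρ.hasDerivAt t (ha t ht).ge).continuousAt.mul
      ((hsol.hasDerivAt_velocity t (ha t ht).ge).continuousAt.norm.pow 2)).continuousWithinAt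
  refine ⟨⟨B, fun t ht => by linarith [hB t ht]⟩,
    integrableOn_Ici_of_hasDerivAt_le_sub hL hL0 (hk.mul_const B)
      (fun t ht => mul_nonneg (hk0 t ht) ?_)
      (hcont.locallyIntegrableOn measurableSet_Ici) hdiss fun t ht => (hL' t ht).trans ?_⟩
  · linarith [hB t ht, hL0 t ht]
  · exact sub_le_sub_right (mul_le_mul_of_nonneg_left (hB t ht) (hk0 t ht)) _

theorem deriv_lyapunov_le_of_bounds {R κ : ℝ} {z : H} (hρ : IsSlowDamping ρ ρ' ρ'' P t₀)
    (hsol : IsHeavyBallSolution ρ Φ' g x x' x'' t₀) (hconv : ConvexOn ℝ univ Φ)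
    (hΦ : ∀ u, HasGradientAt Φ (Φ' u) u) (heven : ∀ u, Φ (-u) = Φ u)
    (ht : IsLateTime ρ ρ' P t₀ t) (hx : ‖x t‖ ≤ R) (hx' : √(P t) * ‖x' t‖ ≤ R) (hz : ‖z‖ ≤ R)
    (hκ0 : 0 ≤ κ) (hκ : κ ≤ P t) :
    deriv (lyapunov ρ ρ' P Φ x x' z κ) t ≤ driftBound R ρ ρ'' P g x' t := by
  have hpos := hρ.pos t ht.ge
  have hxz : ‖x t + z‖ ≤ 2 * R := (norm_add_le _ _).trans (by linarith)
  have hdamp : 0 ≤ (P t - κ) / ρ t * ‖x' t‖ ^ 2 :=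
    mul_nonneg (div_nonneg (sub_nonneg.2 hκ) hpos.le) (sq_nonneg _)
  have hsource : (ρ t * ‖x t + z‖ + (P t - κ) * ‖x' t‖) * ‖g t‖ ≤ 3 * R * (√(P t) * ‖g t‖) :=
    calc (ρ t * ‖x t + z‖ + (P t - κ) * ‖x' t‖) * ‖g t‖
        ≤ (√(P t) * (2 * R) + P t * ‖x' t‖) * ‖g t‖ := by
          gcongr
          · exact ht.le_sqrt_primitive
          · exact sub_le_self _ hκ0
      _ = (2 * R + √(P t) * ‖x' t‖) * (√(P t) * ‖g t‖) := by
          linear_combination -‖x' t‖ * ‖g t‖ * sq_sqrt ht.primitive_pos.le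
      _ ≤ (2 * R + R) * (√(P t) * ‖g t‖) := by gcongr
      _ = 3 * R * (√(P t) * ‖g t‖) := by ring
  have hcurv : |ρ'' t| * (‖x t + z‖ ^ 2 / 2) ≤ |ρ'' t| * ((2 * R) ^ 2 / 2) := by gcongr
  have hderiv := deriv_lyapunov_le hρ hsol hconv hΦ heven ht.ge z hκ
  rw [driftBound]
  linarith

/- The Lyapunov function is taken with `z = x t`, and `κ = P s` so that its energy part vanishes
at time `s`; at time `t` that part is nonnegative because the potential terms cancel. -/
theorem norm_add_self_sq_le {R s : ℝ} (hρ : IsSlowDamping ρ ρ' ρ'' P t₀)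
    (hsol : IsHeavyBallSolution ρ Φ' g x x' x'' t₀) (hconv : ConvexOn ℝ univ Φ)
    (hΦ : ∀ u, HasGradientAt Φ (Φ' u) u) (heven : ∀ u, Φ (-u) = Φ u)
    (hlate : ∀ v ∈ Ici s, IsLateTime ρ ρ' P t₀ v) (hx : ∀ v ∈ Ici s, ‖x v‖ ≤ R)
    (hx' : ∀ v ∈ Ici s, √(P v) * ‖x' v‖ ≤ R)
    (hdrift : IntegrableOn (driftBound R ρ ρ'' P g x') (Ici s)) (hst : s ≤ t) :
    ‖x t + x t‖ ^ 2 / 2 ≤ ‖x s + x t‖ ^ 2 / 2 + (∫ v in Ioi s, driftBound R ρ ρ'' P g x' v)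
      + boundaryError R ρ ρ' x' s + boundaryError R ρ ρ' x' t := by
  have hpos : ∀ v ∈ Ici s, 0 < ρ v := fun v hv => hρ.pos v (hlate v hv).ge
  have hR : 0 ≤ R := (norm_nonneg _).trans (hx s self_mem_Ici)
  have hPmono : ∀ v ∈ Ici s, P s ≤ P v := fun v hv =>
    hρ.monotoneOn_primitive (hlate s self_mem_Ici).ge (hlate v hv).ge hv
  have hgrowth := sub_le_integral_Ioi_of_hasDerivAt_le hst
    (fun v hv => (hasDerivAt_lyapunov hρ hsol hΦ (hlate v hv.1).ge (x t)
      (P s)).differentiableAt.hasDerivAt) hdrift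
    (fun v hv => by
      have := hpos v hv
      rw [driftBound]
      positivity)
    (fun v hv => deriv_lyapunov_le_of_bounds hρ hsol hconv hΦ heven (hlate v hv.1.le)
      (hx v hv.1.le) (hx' v hv.1.le) (hx t hst) (hlate s self_mem_Ici).primitive_pos.le
      (hPmono v hv.1.le))
  have hstart := abs_le.1 (abs_lyapunov_primitive_sub_le (ρ' := ρ') (P := P) (Φ := Φ) (x' := x')
    (hpos s self_mem_Ici).le (hx s self_mem_Ici) (hx t hst))
  have hend := abs_le.1 (abs_lyapunov_primitive_sub_le (ρ' := ρ') (P := P) (Φ := Φ) (x' := x')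
    (hpos t hst).le (hx t hst) (hx t hst))
  have henergy : lyapunov ρ ρ' P Φ x x' (x t) (P t) t ≤ lyapunov ρ ρ' P Φ x x' (x t) (P s) t := by
    have := mul_nonneg (sub_nonneg.2 (hPmono t hst)) (sq_nonneg ‖x' t‖)
    rw [lyapunov, lyapunov]
    linarith
  linarith [hstart.2, hend.1]

theorem exists_tendsto_of_bounds {R : ℝ} (hρ : IsSlowDamping ρ ρ' ρ'' P t₀)
    (hsol : IsHeavyBallSolution ρ Φ' g x x' x'' t₀) (hconv : ConvexOn ℝ univ Φ)
    (hΦ : ∀ u, HasGradientAt Φ (Φ' u) u) (heven : ∀ u, Φ (-u) = Φ u)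
    (hg : IntegrableOn (fun t => √(P t) * ‖g t‖) (Ici t₀))
    (hlate : ∀ t ∈ Ici a, IsLateTime ρ ρ' P t₀ t) (hx : ∀ t ∈ Ici a, ‖x t‖ ≤ R)
    (hx' : ∀ t ∈ Ici a, √(P t) * ‖x' t‖ ≤ R)
    (hdiss : IntegrableOn (fun t => ρ t * ‖x' t‖ ^ 2) (Ici a)) :
    ∃ y, Tendsto x atTop (𝓝 y) := by
  have hsub := Ici_subset_Ici.2 (hlate a self_mem_Ici).ge
  have hdrift : IntegrableOn (driftBound R ρ ρ'' P g x') (Ici a) :=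
    ((hdiss.const_mul (3 / 2)).add ((hg.mono_set hsub).const_mul (3 * R))).add
      ((hρ.integrableOn_deriv_deriv.mono_set hsub).abs.const_mul (2 * R ^ 2))
  have htail : Tendsto (fun s => ∫ v in Ioi s, driftBound R ρ ρ'' P g x' v) atTop (𝓝 0) :=
    tendsto_integral_Ioi_zero tendsto_id
  have hbdry : Tendsto (boundaryError R ρ ρ' x') atTop (𝓝 0) := by
    have hsum := ((hρ.tendsto_mul_norm_zero hx').const_mul (2 * R)).add
      (hρ.tendsto_deriv.abs.const_mul (2 * R ^ 2))
    rwa [abs_zero, mul_zero, mul_zero, add_zero] at hsum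
  refine exists_tendsto_of_forall_eventually_norm_add_self_sq_le fun ε hε => ?_
  have hε6 : 0 < ε / 6 := by positivity
  filter_upwards [eventually_ge_atTop a, htail.eventually_le_const hε6,
    eventually_forall_ge_atTop.2 (hbdry.eventually_le_const hε6)] with s has htail_s hbdry_s t hst
  have hsa := Ici_subset_Ici.2 has
  have hmain := norm_add_self_sq_le hρ hsol hconv hΦ heven (fun v hv => hlate v (hsa hv))
    (fun v hv => hx v (hsa hv)) (fun v hv => hx' v (hsa hv)) (hdrift.mono_set hsa) hst
  linarith [hbdry_s s le_rfl, hbdry_s t hst]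

theorem heavy_ball_strong_convergence_even_general (hρ : IsSlowDamping ρ ρ' ρ'' P t₀)
    (hsol : IsHeavyBallSolution ρ Φ' g x x' x'' t₀) (hconv : ConvexOn ℝ univ Φ)
    (hΦ : ∀ u, HasGradientAt Φ (Φ' u) u) (heven : ∀ u, Φ (-u) = Φ u)
    (hg : IntegrableOn (fun t => √(P t) * ‖g t‖) (Ici t₀)) :
    ∃ xstar ∈ {v : H | ∀ u, Φ v ≤ Φ u}, Tendsto x atTop (𝓝 xstar) := by
  have hmin := apply_zero_le_of_convexOn_of_even hconv heven
  obtain ⟨a, hlate⟩ := eventually_atTop.1 hρ.eventually_isLateTime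
  obtain ⟨⟨B, hB⟩, hdiss⟩ :=
    exists_lyapunov_zero_le_and_integrableOn hρ hsol hconv hΦ heven hg hlate
  have hbound := fun t (ht : t ∈ Ici a) =>
    bounds_of_lyapunov_zero_le (hlate t ht) (hρ.pos t (hlate t ht).ge).le hmin (hB t ht)
  obtain ⟨y, hy⟩ := exists_tendsto_of_bounds hρ hsol hconv hΦ heven hg hlate
    (fun t ht => le_sqrt_of_sq_le (hbound t ht).1)
    (fun t ht => le_sqrt_of_sq_le (hbound t ht).2.1) hdiss
  have hvalue : Tendsto (fun t => Φ (x t)) atTop (𝓝 (Φ y)) :=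
    (hΦ y).continuousAt.tendsto.comp hy
  have hupper : Tendsto (fun t => B / P t + Φ 0) atTop (𝓝 (Φ 0)) := by
    simpa using (hρ.tendsto_primitive.const_div_atTop B).add_const (Φ 0)
  refine ⟨y, fun u => (le_of_tendsto_of_tendsto hvalue hupper ?_).trans (hmin u), hy⟩
  filter_upwards [eventually_ge_atTop a] with t ht
  rw [← sub_le_iff_le_add, le_div_iff₀' (hlate t ht).primitive_pos]
  exact (hbound t ht).2.2

end HeavyBall

section PowerDamping

variable {c α : ℝ}

theorem hasDerivAt_one_add_rpow (β : ℝ) {t : ℝ} (ht : t ∈ Ici 0) :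
    HasDerivAt (fun s : ℝ => (1 + s) ^ β) (β * (1 + t) ^ (β - 1)) t := by
  have hbase : 1 + t ≠ 0 := by linarith [mem_Ici.1 ht]
  simpa using ((hasDerivAt_id t).const_add 1).rpow_const (p := β) (Or.inl hbase)

theorem isSlowDamping_rpow (hc : 0 < c) (hα₀ : -1 < α) (hα₁ : α < 1) :
    IsSlowDamping (fun t => (1 + t) ^ α / c) (fun t => α * (1 + t) ^ (α - 1) / c)
      (fun t => α * ((α - 1) * (1 + t) ^ (α - 1 - 1)) / c)
      (fun t => (1 + t) ^ (α + 1) / ((α + 1) * c)) 0 := by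
  have hshift : Tendsto (fun t : ℝ => 1 + t) atTop atTop :=
    tendsto_atTop_add_const_left _ 1 tendsto_id
  have hα : 0 < α + 1 := by linarith
  constructor
  case pos => exact fun t ht => div_pos (rpow_pos_of_pos (by linarith [mem_Ici.1 ht]) _) hc
  case hasDerivAt => exact fun t ht => (hasDerivAt_one_add_rpow α ht).div_const c
  case hasDerivAt_deriv =>
    exact fun t ht => ((hasDerivAt_one_add_rpow (α - 1) ht).const_mul α).div_const c
  case hasDerivAt_primitive =>
    refine fun t ht => ((hasDerivAt_one_add_rpow (α + 1) ht).div_const _).congr_deriv ?_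
    rw [add_sub_cancel_right, mul_div_mul_left _ _ hα.ne']
  case tendsto_deriv =>
    have hdecay : Tendsto (fun t : ℝ => (1 + t) ^ (α - 1)) atTop (𝓝 0) := by
      simpa [Function.comp_def] using (tendsto_rpow_neg_atTop (sub_pos.2 hα₁)).comp hshift
    simpa using (hdecay.const_mul α).div_const c
  case integrableOn_deriv_deriv =>
    have hpow : IntegrableOn (fun t : ℝ => (1 + t) ^ (α - 1 - 1)) (Ici 0) := by
      rw [integrableOn_Ici_iff_integrableOn_Ioi]
      simp only [add_comm (1 : ℝ)]
      exact integrableOn_add_rpow_Ioi_of_lt (by linarith) (by norm_num)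
    exact ((hpow.const_mul (α - 1)).const_mul α).div_const c
  case tendsto_primitive =>
    exact ((tendsto_rpow_atTop hα).comp hshift).atTop_div_const (mul_pos hα hc)

theorem integrableOn_sqrt_rpow_div_mul {b β : ℝ} {f : ℝ → ℝ}
    (hf : IntegrableOn (fun t => (1 + t) ^ (β / 2) * f t) (Ici 0)) :
    IntegrableOn (fun t => √((1 + t) ^ β / b) * f t) (Ici 0) := by
  refine IntegrableOn.congr_fun (hf.div_const √b) (fun t ht => ?_) measurableSet_Ici
  have hbase : 0 ≤ 1 + t := by linarith [mem_Ici.1 ht]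
  rw [sqrt_div (rpow_nonneg hbase β), sqrt_eq_rpow, sqrt_eq_rpow, ← rpow_mul hbase, mul_one_div]
  ring

end PowerDamping

theorem heavy_ball_strong_convergence_even
    {H : Type*} [NormedAddCommGroup H] [InnerProductSpace ℝ H] [CompleteSpace H]
    (c α : ℝ) (hc : 0 < c) (hα0 : 0 ≤ α) (hα1 : α < 1)
    (Φ : H → ℝ) (Φ' : H → H) (Φstar : ℝ)
    (hΦconv : ConvexOn ℝ Set.univ Φ)
    (hΦdiff : ∀ u : H, HasGradientAt Φ (Φ' u) u)
    (hΦcont : Continuous Φ')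
    (hargmin : {v : H | ∀ u, Φ v ≤ Φ u}.Nonempty)
    (hΦstar : ∀ v ∈ {v : H | ∀ u, Φ v ≤ Φ u}, Φ v = Φstar)
    (g : ℝ → H) (hg : IntegrableOn g (Ici (0:ℝ)))
    (x x' x'' : ℝ → H)
    (hx1 : ∀ t ∈ Ici (0:ℝ), HasDerivAt x (x' t) t)
    (hx2 : ∀ t ∈ Ici (0:ℝ), HasDerivAt x' (x'' t) t)
    (hode : ∀ t ∈ Ici (0:ℝ),
      x'' t + (c / (1 + t) ^ α) • x' t + Φ' (x t) = g t)
    (hgν : IntegrableOn (fun t => (1 + t) ^ ((α + 1) / 2) * ‖g t‖) (Ici (0:ℝ)))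
    (heven : ∀ u : H, Φ (-u) = Φ u) :
    ∃ xstar ∈ {v : H | ∀ u, Φ v ≤ Φ u}, Tendsto x atTop (nhds xstar) :=
  heavy_ball_strong_convergence_even_general (isSlowDamping_rpow hc (by linarith) hα1)
    ⟨hx1, hx2, by simpa only [inv_div] using hode⟩ hΦconv hΦdiff heven
    (integrableOn_sqrt_rpow_div_mul hgν)
end

section
/- Let ω : [0,∞) → H be measurable with ∫₀^∞ (1/γ(t)) ‖ω(t)‖ dt < ∞, and let y ∈ W²,¹_loc(0,∞;H) solve y''(t) + γ(t) y'(t) = ω(t) for t ≥ 0. Then the derivative y' is Bochner integrable on [0,∞): ∫₀^∞ ‖y'(t)‖ dt < ∞. -/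
open MeasureTheory Filter Real Set RealInnerProductSpace

/-!
The norm of a normed space is convex, so along the curve `v` it has a one-sided derivative at every
point where `v` does, and if `v' + γ • v = ω` this derivative is at most `‖ω‖ - γ * ‖v‖`. Hence the
right derivative of the energy `γ⁻¹ * ‖v‖` is at most `γ⁻¹ * ‖ω‖ - (1 - (γ⁻¹)') * ‖v‖`. Once
`(γ⁻¹)' ≤ k < 1`, integrating this inequality bounds `(1 - k) ∫ ‖v‖` by the initial energy plus
`∫ γ⁻¹ * ‖ω‖`. For `γ t = c / (1 + t) ^ α` with `α < 1`, the derivative of `γ⁻¹` tends to `0`.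
-/

section NormDerivative

variable {E : Type*} [NormedAddCommGroup E] [NormedSpace ℝ E]

/-- The one-sided directional derivative of the norm at `x` in the direction `u`, i.e. the limit of
`(‖x + h • u‖ - ‖x‖) / h` as `h` decreases to `0`; the limit exists since the norm is convex. -/
noncomputable def normDirDeriv (x u : E) : ℝ :=
  derivWithin (fun h : ℝ => ‖x + h • u‖) (Ioi 0) 0

theorem convexOn_norm_add_smul (x u : E) : ConvexOn ℝ univ fun h : ℝ => ‖x + h • u‖ := by
  simpa [Function.comp_def, AffineMap.lineMap_apply, add_comm] using
    (convexOn_univ_norm (E := E)).comp_affineMap (AffineMap.lineMap x (x + u))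

theorem hasDerivWithinAt_norm_add_smul (x u : E) :
    HasDerivWithinAt (fun h : ℝ => ‖x + h • u‖) (normDirDeriv x u) (Ioi 0) 0 :=
  (convexOn_norm_add_smul x u).hasDerivWithinAt_rightDeriv_of_mem_interior (by simp)

theorem normDirDeriv_le_norm_add_smul_sub (x u : E) (γ : ℝ) :
    normDirDeriv x u ≤ ‖u + γ • x‖ - γ * ‖x‖ := by
  obtain ⟨h, hpos, hγ⟩ : ∃ h : ℝ, 0 < h ∧ h * γ ≤ 1 :=
    ⟨(|γ| + 1)⁻¹, by positivity, by
      rw [inv_mul_le_one₀ (by positivity)]; linarith [le_abs_self γ]⟩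
  have norm_le : ‖x + h • u‖ ≤ (1 - h * γ) * ‖x‖ + h * ‖u + γ • x‖ :=
    calc ‖x + h • u‖ = ‖(1 - h * γ) • x + h • (u + γ • x)‖ := by congr 1; module
      _ ≤ ‖(1 - h * γ) • x‖ + ‖h • (u + γ • x)‖ := norm_add_le _ _
      _ = (1 - h * γ) * ‖x‖ + h * ‖u + γ • x‖ := by
        rw [norm_smul_of_nonneg (sub_nonneg.2 hγ), norm_smul_of_nonneg hpos.le]
  calc normDirDeriv x u ≤ slope (fun h : ℝ => ‖x + h • u‖) 0 h :=
        (convexOn_norm_add_smul x u).rightDeriv_le_slope_of_mem_interior (by simp) (mem_univ h) hpos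
    _ = (‖x + h • u‖ - ‖x‖) / h := by simp [slope_def_field]
    _ ≤ ‖u + γ • x‖ - γ * ‖x‖ := by rw [div_le_iff₀ hpos]; linarith

theorem hasDerivWithinAt_norm_normDirDeriv {v : ℝ → E} {u : E} {t : ℝ}
    (hv : HasDerivWithinAt v u (Ioi t) t) :
    HasDerivWithinAt (fun s => ‖v s‖) (normDirDeriv (v t) u) (Ioi t) t := by
  have tangent : HasDerivWithinAt (fun s => ‖v t + (s - t) • u‖) (normDirDeriv (v t) u)
      (Ioi t) t := by
    have hsub : HasDerivWithinAt (fun s => s - t) 1 (Ioi t) t :=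
      (hasDerivWithinAt_id t (Ioi t)).sub_const t
    simpa only [Function.comp_def, mul_one] using
      (hasDerivWithinAt_norm_add_smul (v t) u).comp_of_eq t hsub
        (fun _ hs => mem_Ioi.2 (sub_pos.2 hs)) (sub_self t).symm
  have deviation : HasDerivWithinAt (fun s => ‖v s‖ - ‖v t + (s - t) • u‖) 0 (Ioi t) t := by
    rw [hasDerivWithinAt_iff_isLittleO] at hv ⊢
    refine (Asymptotics.isBigO_of_le _ fun s => ?_).trans_isLittleO hv
    simpa [sub_sub] using abs_norm_sub_norm_le (v s) (v t + (s - t) • u)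
  simpa only [Pi.add_def, sub_add_cancel, zero_add] using deviation.add tangent

theorem mul_norm_add_inv_mul_normDirDeriv_le {β γ k : ℝ} (hβ : β ≤ k) (hγ : 0 < γ) (x u : E) :
    β * ‖x‖ + γ⁻¹ * normDirDeriv x u ≤ γ⁻¹ * ‖u + γ • x‖ - (1 - k) * ‖x‖ :=
  calc β * ‖x‖ + γ⁻¹ * normDirDeriv x u
      ≤ k * ‖x‖ + γ⁻¹ * (‖u + γ • x‖ - γ * ‖x‖) := by
        gcongr
        exact normDirDeriv_le_norm_add_smul_sub x u γ
    _ = γ⁻¹ * ‖u + γ • x‖ - (1 - k) * ‖x‖ := by field_simp; ring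

end NormDerivative

theorem integrableOn_Ioi_of_hasDerivWithinAt_le_sub {F F' φ ψ : ℝ → ℝ} {a : ℝ}
    (hF : ContinuousOn F (Ici a)) (hF' : ∀ t ∈ Ioi a, HasDerivWithinAt F (F' t) (Ioi t) t)
    (hle : ∀ t ∈ Ioi a, F' t ≤ φ t - ψ t) (hF0 : ∀ t ∈ Ici a, 0 ≤ F t)
    (hψ0 : ∀ t ∈ Ioi a, 0 ≤ ψ t) (hφ : IntegrableOn φ (Ici a))
    (hψ : ∀ b, IntegrableOn ψ (Icc a b)) : IntegrableOn ψ (Ioi a) := by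
  refine integrableOn_Ioi_of_intervalIntegral_norm_bounded (F a + ∫ t in Ici a, ‖φ t‖) a
    (fun b => (hψ b).mono_set Ioc_subset_Icc_self) tendsto_id ?_
  filter_upwards [eventually_ge_atTop a] with b hab
  have hφb : IntegrableOn φ (Icc a b) := hφ.mono_set Icc_subset_Ici_self
  have increment_le : F b - F a ≤ (∫ t in a..b, φ t) - ∫ t in a..b, ψ t := by
    rw [← intervalIntegral.integral_sub
      ((intervalIntegrable_iff_integrableOn_Icc_of_le hab).2 hφb)
      ((intervalIntegrable_iff_integrableOn_Icc_of_le hab).2 (hψ b))]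
    exact intervalIntegral.sub_le_integral_of_hasDeriv_right_of_le hab
      (hF.mono Icc_subset_Ici_self) (fun t ht => hF' t ht.1) (hφb.sub (hψ b))
      fun t ht => hle t ht.1
  have integral_le : ∫ t in a..b, φ t ≤ ∫ t in Ici a, ‖φ t‖ := by
    rw [intervalIntegral.integral_of_le hab]
    calc ∫ t in Ioc a b, φ t ≤ ∫ t in Ioc a b, ‖φ t‖ :=
          (le_norm_self _).trans (norm_integral_le_integral_norm _)
      _ ≤ ∫ t in Ici a, ‖φ t‖ :=
        setIntegral_mono_set hφ.norm (ae_of_all _ fun _ => norm_nonneg _)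
          (Ioc_subset_Ioi_self.trans Ioi_subset_Ici_self).eventuallyLE
  calc ∫ t in a..b, ‖ψ t‖ = ∫ t in a..b, ψ t := by
        rw [intervalIntegral.integral_of_le hab, intervalIntegral.integral_of_le hab]
        exact setIntegral_congr_fun measurableSet_Ioc fun t ht => norm_of_nonneg (hψ0 t ht.1)
    _ ≤ F a + ∫ t in Ici a, ‖φ t‖ := by linarith [hF0 b hab]

theorem linear_ode_velocity_integrable_general
    {E : Type*} [NormedAddCommGroup E] [NormedSpace ℝ E] {a k : ℝ} {γ β : ℝ → ℝ} {ω v v' : ℝ → E}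
    (hγ : ∀ t ∈ Ici a, 0 < γ t)
    (hβ : ∀ t ∈ Ici a, HasDerivWithinAt (fun s => (γ s)⁻¹) (β t) (Ici a) t)
    (hk : k < 1) (hβk : ∀ᶠ t in atTop, β t ≤ k)
    (hω : IntegrableOn (fun t => (γ t)⁻¹ * ‖ω t‖) (Ici a))
    (hv : ∀ t ∈ Ici a, HasDerivWithinAt v (v' t) (Ici a) t)
    (hode : ∀ t ∈ Ici a, v' t + γ t • v t = ω t) :
    IntegrableOn v (Ici a) := by
  obtain ⟨T, haT, hT⟩ : ∃ T, a ≤ T ∧ ∀ t ≥ T, β t ≤ k :=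
    ((eventually_ge_atTop a).and (eventually_forall_ge_atTop.2 hβk)).exists
  have hTa : Ici T ⊆ Ici a := Ici_subset_Ici.2 haT
  have hvcont : ContinuousOn v (Ici a) := fun t ht => (hv t ht).continuousWithinAt
  have hγcont : ContinuousOn (fun t => (γ t)⁻¹) (Ici a) := fun t ht => (hβ t ht).continuousWithinAt
  have energy_deriv : ∀ t ∈ Ici a, HasDerivWithinAt (fun s => (γ s)⁻¹ * ‖v s‖)
      (β t * ‖v t‖ + (γ t)⁻¹ * normDirDeriv (v t) (v' t)) (Ioi t) t := fun t ht =>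
    have hta : Ioi t ⊆ Ici a := Ioi_subset_Ici ht
    ((hβ t ht).mono hta).mul (hasDerivWithinAt_norm_normDirDeriv ((hv t ht).mono hta))
  have energy_deriv_le : ∀ t ∈ Ici T, β t * ‖v t‖ + (γ t)⁻¹ * normDirDeriv (v t) (v' t) ≤
      (γ t)⁻¹ * ‖ω t‖ - (1 - k) * ‖v t‖ := fun t ht =>
    hode t (hTa ht) ▸ mul_norm_add_inv_mul_normDirDeriv_le (hT t ht) (hγ t (hTa ht)) (v t) (v' t)
  have tail : IntegrableOn (fun t => (1 - k) * ‖v t‖) (Ioi T) :=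
    integrableOn_Ioi_of_hasDerivWithinAt_le_sub ((hγcont.mul hvcont.norm).mono hTa)
      (fun t ht => energy_deriv t (hTa (Ioi_subset_Ici_self ht)))
      (fun t ht => energy_deriv_le t (Ioi_subset_Ici_self ht))
      (fun t ht => mul_nonneg (inv_nonneg.2 (hγ t (hTa ht)).le) (norm_nonneg _))
      (fun t _ => mul_nonneg (sub_nonneg.2 hk.le) (norm_nonneg _)) (hω.mono_set hTa)
      fun b => ((hvcont.norm.const_mul (1 - k)).mono
        (Icc_subset_Ici_self.trans hTa)).integrableOn_Icc
  have hvmeas : AEStronglyMeasurable v (volume.restrict (Ioi T)) :=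
    (hvcont.mono (Ioi_subset_Ici haT)).aestronglyMeasurable measurableSet_Ioi
  rw [← Icc_union_Ioi_eq_Ici haT]
  refine (hvcont.mono Icc_subset_Ici_self).integrableOn_Icc.union ?_
  rw [IntegrableOn, ← integrable_norm_iff hvmeas]
  exact (integrable_const_mul_iff (sub_pos.2 hk).ne'.isUnit _).1 tail

section PolynomialDamping

variable {c α : ℝ}

theorem hasDerivAt_inv_div_one_add_rpow {t : ℝ} (ht : 1 + t ≠ 0) :
    HasDerivAt (fun s => (c / (1 + s) ^ α)⁻¹) (α * (1 + t) ^ (α - 1) / c) t := by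
  simpa [inv_div] using
    (((hasDerivAt_id t).const_add 1).rpow_const (p := α) (Or.inl ht)).div_const c

theorem tendsto_mul_one_add_rpow_sub_one_div (hα : α < 1) :
    Tendsto (fun t : ℝ => α * (1 + t) ^ (α - 1) / c) atTop (nhds 0) := by
  have rpow_tendsto : Tendsto (fun t : ℝ => (1 + t) ^ (α - 1)) atTop (nhds 0) := by
    simpa [Function.comp_def] using (tendsto_rpow_neg_atTop (sub_pos.2 hα)).comp
      (tendsto_atTop_add_const_left atTop 1 tendsto_id)
  simpa using (rpow_tendsto.const_mul α).div_const c

end PolynomialDamping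

theorem linear_ode_velocity_integrable
    {H : Type*} [NormedAddCommGroup H] [InnerProductSpace ℝ H] [CompleteSpace H]
    (c α : ℝ) (hc : 0 < c) (hα0 : 0 ≤ α) (hα1 : α < 1)
    (ω : ℝ → H) (hωmeas : AEStronglyMeasurable ω (volume.restrict (Ici (0:ℝ))))
    (hωint : IntegrableOn (fun t => (c / (1 + t) ^ α)⁻¹ * ‖ω t‖) (Ici (0:ℝ)))
    (y y' y'' : ℝ → H)
    (hy1 : ∀ t ∈ Ici (0:ℝ), HasDerivAt y (y' t) t)
    (hy2 : ∀ t ∈ Ici (0:ℝ), HasDerivAt y' (y'' t) t)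
    (hode : ∀ t ∈ Ici (0:ℝ), y'' t + (c / (1 + t) ^ α) • y' t = ω t) :
    IntegrableOn (fun t => ‖y' t‖) (Ici (0:ℝ)) := by
  have one_add_pos : ∀ t ∈ Ici (0 : ℝ), 0 < 1 + t := fun t ht => add_pos_of_pos_of_nonneg one_pos ht
  exact (linear_ode_velocity_integrable_general
    (fun t ht => div_pos hc (rpow_pos_of_pos (one_add_pos t ht) α))
    (fun t ht => (hasDerivAt_inv_div_one_add_rpow (one_add_pos t ht).ne').hasDerivWithinAt)
    one_half_lt_one
    ((tendsto_mul_one_add_rpow_sub_one_div hα1).eventually_le_const one_half_pos)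
    hωint (fun t ht => (hy2 t ht).hasDerivWithinAt) hode).norm
end
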